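/- No dumbbell graph is L-cospectral with a theta graph: for all integers p ≥ q ≥ 3, k ≥ 0 and all integers r ≥ s ≥ t ≥ 0 with (s,t) ≠ (0,0), the characteristic polynomial of the Laplacian matrix of the dumbbell graph D_{p,k,q} is different from the characteristic polynomial of the Laplacian matrix of the theta graph Θ_{r,s,t}. -/

import Mathlib

/-!
Both graphs are obtained from two junction vertices by attaching three paths, whose `i`-th path
has `len i` internal vertices and runs from junction `α i` to junction `β i` (a cycle is a path
returning to its own junction). At the point `2 - (y + y⁻¹)`, with `y ≥ 2` rational, the matrix
`L - x I` becomes, in a suitable order of the vertices, the matrix `skel len α β (y + y⁻¹)`.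
Its path blocks have determinants `br y (a + 1)`, where `br y n = (yⁿ - y⁻ⁿ) / (y - y⁻¹)`, and
their inverses are explicit in these numbers. Taking the Schur complement of the path blocks
leaves a `2 × 2` determinant (`det_skel`), which is computed in closed form in
`eval_dumbbellPoly` and `eval_thetaPoly`: up to a factor depending only on `y` and on the number
of vertices it is the value at `y` of `dumbbellPoly p k q`, respectively of
`thetaPoly (r + 1) (s + 1) (t + 1)`.

If the characteristic polynomials agree, then so do the numbers of vertices and, as `y` takes
infinitely many values, these two polynomials (`polys_eq_of_charpoly_eq`). With `R = r + 1`,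
`S = s + 1`, `T = t + 1` this yields three relations.

* `p + q + k + 1 = R + S + T`, the equality of the numbers of vertices.
* `p q = R S + R T + S T`: both polynomials vanish to order three at `X = 1`, and the leading
  coefficients there are `8 n` times the numbers of spanning trees (`mul_eq_of_polys_eq`).
* `q ≤ S + T`: otherwise the coefficients of `X ^ (S + T)` differ (`le_of_polys_eq`).

They are contradictory (`arith_contra`): writing `d = S + T - q ≥ 0`, the first and the last give
`p q ≤ (R + d - 1) (S + T - d)`, which is smaller than `R (S + T) + S T`.
-/

open Polynomial Matrix SimpleGraph
open scoped Classical

/-- The matrix `U_n`: tridiagonal, 2 on the diagonal, -1 on the sub/super-diagonal. -/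
def Umatrix (R : Type*) [Ring R] (n : ℕ) : Matrix (Fin n) (Fin n) R :=
  Matrix.of fun i j =>
    if (i : ℕ) = (j : ℕ) then 2
    else if (i : ℕ) + 1 = (j : ℕ) ∨ (j : ℕ) + 1 = (i : ℕ) then -1 else 0

/-- Auxiliary relation for the dumbbell graph `D_{p,k,q}` on vertices `0,…,p+q+k-1`:
vertices `0,…,p-1` form the cycle `C_p`, vertices `p,…,p+q-1` form the cycle `C_q`, and
vertices `p+q,…,p+q+k-1` are the internal vertices of the connecting path (in order),
with vertex `0` of `C_p` and vertex `p` of `C_q` being its endpoints. -/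
def dumbbellRel (p k q : ℕ) (a b : ℕ) : Prop :=
  (b = a + 1 ∧ b < p) ∨
  (a = 0 ∧ b = p - 1) ∨
  (p ≤ a ∧ b = a + 1 ∧ b < p + q) ∨
  (a = p ∧ b = p + q - 1) ∨
  (p + q ≤ a ∧ b = a + 1 ∧ b < p + q + k) ∨
  (if k = 0 then a = 0 ∧ b = p
   else (a = 0 ∧ b = p + q) ∨ (a = p ∧ b = p + q + k - 1))

/-- The dumbbell graph `D_{p,k,q}` on `p + q + k` vertices. -/
def dumbbellGraph (p k q : ℕ) : SimpleGraph (Fin (p + q + k)) :=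
  SimpleGraph.fromRel (fun a b => dumbbellRel p k q (a : ℕ) (b : ℕ))

/-- One path of a theta graph: endpoints `0` and `v`, with `m` internal vertices
`L, L+1, …, L+m-1` (in order); if `m = 0` the path is the single edge `0v`. -/
def thetaBlockRel (v L m : ℕ) (a b : ℕ) : Prop :=
  if m = 0 then a = 0 ∧ b = v
  else (a = 0 ∧ b = L) ∨ (L ≤ a ∧ b = a + 1 ∧ b < L + m) ∨ (a = L + m - 1 ∧ b = v)

/-- The theta graph `Θ_{r,s,t}` on `r + s + t + 2` vertices: the degree-3 vertices are
`u = 0` and `v = r+s+t+1`, joined by three internally disjoint paths with `r`, `s`, `t`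
internal vertices respectively. -/
def thetaGraph (r s t : ℕ) : SimpleGraph (Fin (r + s + t + 2)) :=
  SimpleGraph.fromRel (fun a b =>
    thetaBlockRel (r + s + t + 1) 1 r (a : ℕ) (b : ℕ) ∨
    thetaBlockRel (r + s + t + 1) (r + 1) s (a : ℕ) (b : ℕ) ∨
    thetaBlockRel (r + s + t + 1) (r + s + 1) t (a : ℕ) (b : ℕ))

/-- The matrix `L_{q,k}`: the principal submatrix of the Laplacian matrix of a dumbbell
graph `D_{p,k,q}` obtained by deleting the rows and columns of the `p` vertices of `C_p`.
Indices `0,…,k-1` are the path vertices `u_1,…,u_k` and indices `k,…,k+q-1` are the cycle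
vertices `w_1,…,w_q`. -/
def dumbbellMinor (R : Type*) [Ring R] (q k : ℕ) : Matrix (Fin (q + k)) (Fin (q + k)) R :=
  Matrix.of fun a b =>
    if (a : ℕ) = (b : ℕ) then (if (a : ℕ) = k then 3 else 2)
    else if (a : ℕ) + 1 = (b : ℕ) ∨ (b : ℕ) + 1 = (a : ℕ) ∨
            ((a : ℕ) = k ∧ (b : ℕ) = k + q - 1) ∨ ((a : ℕ) = k + q - 1 ∧ (b : ℕ) = k)
    then -1 else 0

/-- The matrix `θ_{r,s,t}`: the principal submatrix of the Laplacian matrix of the theta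
graph `Θ_{r,s,t}` obtained by deleting the row and column of the degree-3 vertex `u = 0`. -/
noncomputable def thetaMinor (r s t : ℕ) :
    Matrix (Fin (r + s + t + 1)) (Fin (r + s + t + 1)) ℚ :=
  ((thetaGraph r s t).lapMatrix ℚ).submatrix (fun i => i.succ) (fun i => i.succ)

/-- The number of spanning trees of a graph. -/
noncomputable def spanningTreeCount {V : Type*} (G : SimpleGraph V) : ℕ :=
  Nat.card {H : G.Subgraph // H.verts = Set.univ ∧ H.coe.IsTree}

/-! ### Paths and their determinants -/

/-- The quantum integer `(yⁿ - y⁻ⁿ) / (y - y⁻¹)`; for `z = y + y⁻¹` these are the terms of the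
sequence `0, 1, z, z² - 1, …` satisfying `u (n + 2) = z u (n + 1) - u n`. -/
def br (y : ℚ) (n : ℕ) : ℚ := (y ^ n - y⁻¹ ^ n) / (y - y⁻¹)

lemma br_zero (y : ℚ) : br y 0 = 0 := by simp [br]

lemma sub_inv_pos {y : ℚ} (hy : 2 ≤ y) : 0 < y - y⁻¹ := by
  have : y⁻¹ < 1 := inv_lt_one_of_one_lt₀ (by linarith)
  linarith

lemma br_one {y : ℚ} (hy : 2 ≤ y) : br y 1 = 1 := by
  simp [br, (sub_inv_pos hy).ne']

lemma br_add_two {y : ℚ} (hy : 2 ≤ y) (n : ℕ) :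
    br y (n + 2) = (y + y⁻¹) * br y (n + 1) - br y n := by
  have h0 : y ≠ 0 := by linarith
  have h1 := (sub_inv_pos hy).ne'
  simp only [br]
  rw [mul_div_assoc', ← sub_div]
  congr 1
  have h2 : y * y⁻¹ = 1 := mul_inv_cancel₀ h0
  linear_combination (-y ^ n + y⁻¹ ^ n) * h2

lemma br_succ_pos {y : ℚ} (hy : 2 ≤ y) (n : ℕ) : 0 < br y (n + 1) := by
  have h1 : (1:ℚ) < y ^ (n + 1) := one_lt_pow₀ (by linarith) (by omega)
  have h2 : y⁻¹ ^ (n + 1) < 1 := by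
    rw [inv_pow]; exact inv_lt_one_of_one_lt₀ h1
  exact div_pos (by linarith) (sub_inv_pos hy)

/-- The tridiagonal `a × a` matrix with `z` on the diagonal and `-1` next to it: the block of
`L - (2 - z) I` on the internal vertices of a path with `a` internal vertices. -/
def pathBlock (z : ℚ) (a : ℕ) : Matrix (Fin a) (Fin a) ℚ :=
  Matrix.of fun i j =>
    if (i : ℕ) = j then z else if (i : ℕ) + 1 = j ∨ (j : ℕ) + 1 = i then -1 else 0

lemma pathBlock_sum (z : ℚ) (a : ℕ) (i : Fin a) (g : ℕ → ℚ) :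
    ∑ j : Fin a, pathBlock z a i j * g j =
      z * g i - (if 0 < (i : ℕ) then g (i - 1) else 0) -
        (if (i : ℕ) + 1 < a then g (i + 1) else 0) := by
  have hi := i.2
  have key : ∀ j : ℕ, (if (i : ℕ) = j then z else
      if (i : ℕ) + 1 = j ∨ j + 1 = i then -1 else 0) * g j =
      (if j = (i : ℕ) then z * g i else 0)
        - (if j = (i : ℕ) - 1 then (if 0 < (i : ℕ) then g (i - 1) else 0) else 0)
        - (if j = (i : ℕ) + 1 then g (i + 1) else 0) := by
    intro j
    split_ifs <;> first | omega | skip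
    all_goals subst_vars
    all_goals try simp
  simp only [pathBlock, Matrix.of_apply]
  rw [Fin.sum_univ_eq_sum_range (fun j => (if (i : ℕ) = j then z else
      if (i : ℕ) + 1 = j ∨ j + 1 = i then -1 else 0) * g j) a]
  simp only [key, Finset.sum_sub_distrib, Finset.sum_ite_eq', Finset.mem_range]
  rw [if_pos hi, if_pos (by omega : (i : ℕ) - 1 < a)]

/-- The vector `br y (a - j)` solves the path equations except at the first vertex. -/
lemma pathBlock_sum_left {y : ℚ} (hy : 2 ≤ y) (a : ℕ) (i : Fin a) :
    ∑ j : Fin a, pathBlock (y + y⁻¹) a i j * br y (a - j) =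
      if (i : ℕ) = 0 then br y (a + 1) else 0 := by
  have hi := i.2
  rw [pathBlock_sum (y + y⁻¹) a i (fun j => br y (a - j))]
  have h1 : (if (i : ℕ) + 1 < a then br y (a - (i + 1)) else 0) = br y (a - (i + 1)) := by
    split_ifs with h
    · rfl
    · rw [show a - ((i : ℕ) + 1) = 0 by omega, br_zero]
  rw [h1]
  obtain ⟨d, hd⟩ : ∃ d, a = i + 1 + d := ⟨a - (i + 1), by omega⟩
  have h2 := br_add_two hy d
  rw [show a - (i : ℕ) = d + 1 by omega, show a - ((i : ℕ) + 1) = d by omega]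
  split_ifs with h3 h4
  · omega
  · rw [show a - ((i : ℕ) - 1) = d + 2 by omega]; linarith
  · rw [show a + 1 = d + 2 by omega]; linarith
  · omega

/-- The vector `br y (j + 1)` solves the path equations except at the last vertex. -/
lemma pathBlock_sum_right {y : ℚ} (hy : 2 ≤ y) (a : ℕ) (i : Fin a) :
    ∑ j : Fin a, pathBlock (y + y⁻¹) a i j * br y (j + 1) =
      if (i : ℕ) + 1 = a then br y (a + 1) else 0 := by
  have hi := i.2
  rw [pathBlock_sum (y + y⁻¹) a i (fun j => br y (j + 1))]
  have h1 : (if 0 < (i : ℕ) then br y (i - 1 + 1) else 0) = br y i := by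
    split_ifs with h
    · rw [Nat.sub_add_cancel h]
    · rw [show (i : ℕ) = 0 by omega, br_zero]
  rw [h1]
  have h2 := br_add_two hy i
  split_ifs with h3 h4 h4
  · omega
  · rw [show (i : ℕ) + 1 + 1 = i + 2 by omega]; linarith
  · rw [show a + 1 = i + 2 by omega]; linarith
  · omega

lemma det_pathBlock {y : ℚ} (hy : 2 ≤ y) (a : ℕ) :
    (pathBlock (y + y⁻¹) a).det = br y (a + 1) := by
  induction a with
  | zero => simp [br_one hy]
  | succ a ih =>
    set Z := pathBlock (y + y⁻¹) (a + 1) with hZ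
    have h1 : Matrix.mulVec Z (fun j => br y (a + 1 - j)) = br y (a + 2) • Pi.single 0 1 := by
      ext i
      have := pathBlock_sum_left hy (a + 1) i
      simp only [Matrix.mulVec, dotProduct]
      rw [this]
      by_cases h : i = 0
      · simp [h]
      · have : (i : ℕ) ≠ 0 := fun h' => h (Fin.ext h')
        simp [h]
    -- Applying the adjugate isolates its `(0, 0)` entry, which is the determinant
    -- of the shorter path.
    have h2 := congrArg (fun v => Matrix.mulVec Z.adjugate v 0) h1
    simp only [Matrix.mulVec_mulVec, Matrix.adjugate_mul, Matrix.mulVec_smul,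
      Matrix.smul_mulVec, Matrix.one_mulVec, Pi.smul_apply, Matrix.mulVec_single_one,
      Matrix.col_apply, smul_eq_mul, Matrix.adjugate_fin_succ_eq_det_submatrix] at h2
    have h3 : Z.submatrix (Fin.succAbove 0) (Fin.succAbove 0) = pathBlock (y + y⁻¹) a := by
      ext i j
      simp [hZ, pathBlock]
    rw [h3, ih] at h2
    simp at h2
    have := (br_succ_pos hy a).ne'
    exact h2.resolve_right this

/-! ### Two junctions joined by three paths, and the Schur complement -/

/-- Vertices of a graph made of two junctions and three paths with `len i` internal vertices. -/
abbrev SkelIdx (len : Fin 3 → ℕ) : Type := Fin 2 ⊕ (Σ i : Fin 3, Fin (len i))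

/-- The Kronecker delta on the two junctions. -/
def ind (u v : Fin 2) : ℚ := if u = v then 1 else 0

/-- The block of `L - (2 - z) I` on the two junctions. The diagonal entry is `z + 1` because both
junctions have degree `3`; a path without internal vertices is an edge between its ends. -/
def juncBlock (len : Fin 3 → ℕ) (α β : Fin 3 → Fin 2) (z : ℚ) : Matrix (Fin 2) (Fin 2) ℚ :=
  Matrix.of fun u v => (if u = v then z + 1 else 0) -
    ∑ i, if len i = 0 then ind u (α i) * ind v (β i) + ind u (β i) * ind v (α i) else 0

/-- The block of `L - (2 - z) I` between the internal path vertices and the junctions: the first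
vertex of path `i` is adjacent to `α i` and the last one to `β i`. -/
def linkBlock (len : Fin 3 → ℕ) (α β : Fin 3 → Fin 2) :
    Matrix (Σ i : Fin 3, Fin (len i)) (Fin 2) ℚ :=
  Matrix.of fun x u => -((if (x.2 : ℕ) = 0 then ind u (α x.1) else 0) +
    (if (x.2 : ℕ) + 1 = len x.1 then ind u (β x.1) else 0))

/-- The matrix `L - (2 - z) I` of the graph in which path `i`, with `len i` internal vertices, joins
the junction `α i` to the junction `β i`. Here both junctions are assumed to have degree `3`, and a
closed path is assumed to have at least two internal vertices. -/
def skel (len : Fin 3 → ℕ) (α β : Fin 3 → Fin 2) (z : ℚ) :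
    Matrix (SkelIdx len) (SkelIdx len) ℚ :=
  Matrix.fromBlocks (juncBlock len α β z) (linkBlock len α β).transpose (linkBlock len α β)
    (Matrix.blockDiagonal' fun i => pathBlock z (len i))

/-- The Schur complement in `skel len α β (y + y⁻¹)` of the blocks of the three paths. -/
def effBlock (len : Fin 3 → ℕ) (α β : Fin 3 → Fin 2) (y : ℚ) : Matrix (Fin 2) (Fin 2) ℚ :=
  Matrix.of fun u v => (if u = v then y + y⁻¹ + 1 else 0) -
    ∑ i, ((ind u (α i) * ind v (α i) + ind u (β i) * ind v (β i)) * br y (len i) +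
      (ind u (α i) * ind v (β i) + ind u (β i) * ind v (α i))) / br y (len i + 1)

/-- The product of the inverse of the path blocks with the coupling block. -/
def solBlock (len : Fin 3 → ℕ) (α β : Fin 3 → Fin 2) (y : ℚ) :
    Matrix (Σ i : Fin 3, Fin (len i)) (Fin 2) ℚ :=
  Matrix.of fun x u => -((ind u (α x.1) * br y (len x.1 - x.2) +
    ind u (β x.1) * br y (x.2 + 1)) / br y (len x.1 + 1))

lemma blockDiagonal_mul_solBlock (len : Fin 3 → ℕ) (α β : Fin 3 → Fin 2) {y : ℚ} (hy : 2 ≤ y) :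
    (Matrix.blockDiagonal' fun i => pathBlock (y + y⁻¹) (len i)) * solBlock len α β y =
      linkBlock len α β := by
  ext ⟨i, j⟩ u
  have hb := (br_succ_pos hy (len i)).ne'
  have h1 := pathBlock_sum_left hy (len i) j
  have h2 := pathBlock_sum_right hy (len i) j
  rw [Matrix.mul_apply, Fintype.sum_sigma, Finset.sum_eq_single i]
  · simp only [Matrix.blockDiagonal'_apply_eq, solBlock, linkBlock, Matrix.of_apply]
    have h3 : ∀ x : Fin (len i), pathBlock (y + y⁻¹) (len i) j x *
        -((ind u (α i) * br y (len i - x) + ind u (β i) * br y (x + 1)) / br y (len i + 1)) =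
        -(ind u (α i) / br y (len i + 1)) * (pathBlock (y + y⁻¹) (len i) j x * br y (len i - x)) +
        -(ind u (β i) / br y (len i + 1)) * (pathBlock (y + y⁻¹) (len i) j x * br y (x + 1)) := by
      intro x; ring
    simp only [h3, Finset.sum_add_distrib, ← Finset.mul_sum, h1, h2]
    split_ifs <;> field_simp <;> ring
  · intro k _ hk
    refine Finset.sum_eq_zero fun x _ => ?_
    rw [Matrix.blockDiagonal'_apply_ne _ _ _ (Ne.symm hk), zero_mul]
  · simp

lemma junc_sub_link_mul_sol (len : Fin 3 → ℕ) (α β : Fin 3 → Fin 2) {y : ℚ} (hy : 2 ≤ y) :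
    juncBlock len α β (y + y⁻¹) - (linkBlock len α β).transpose * solBlock len α β y =
      effBlock len α β y := by
  ext u v
  simp only [Matrix.sub_apply, Matrix.mul_apply, juncBlock, effBlock, Matrix.of_apply,
    Fintype.sum_sigma]
  rw [sub_sub, ← Finset.sum_add_distrib]
  congr 1
  refine Finset.sum_congr rfl fun i _ => ?_
  have hb := (br_succ_pos hy (len i)).ne'
  have h1 : ∀ x : Fin (len i), (linkBlock len α β).transpose u ⟨i, x⟩ *
      solBlock len α β y ⟨i, x⟩ v =
      (if (x : ℕ) = 0 then ind u (α i) * ((ind v (α i) * br y (len i) +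
        ind v (β i) * 1) / br y (len i + 1)) else 0) +
      (if (x : ℕ) = len i - 1 then ind u (β i) * ((ind v (α i) * 1 +
        ind v (β i) * br y (len i)) / br y (len i + 1)) else 0) := by
    intro x
    have hx := x.2
    simp only [linkBlock, solBlock, Matrix.transpose_apply, Matrix.of_apply]
    simp only [show ((x : ℕ) = len i - 1) = ((x : ℕ) + 1 = len i) from propext (by omega)]
    have e1 : (x : ℕ) = 0 → br y (len i - x) = br y (len i) ∧ br y (x + 1) = 1 := by
      intro h; rw [h]; exact ⟨rfl, br_one hy⟩
    have e2 : (x : ℕ) + 1 = len i → br y (len i - x) = 1 ∧ br y (x + 1) = br y (len i) := by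
      intro h; rw [show len i - (x : ℕ) = 1 by omega, h]; exact ⟨br_one hy, rfl⟩
    split_ifs with h h' h'
    · have := e1 h; have := e2 h'
      rw [(e1 h).1, (e1 h).2, ← (e1 h).1, (e2 h').1]; ring
    · rw [(e1 h).1, (e1 h).2]; ring
    · rw [(e2 h').1, (e2 h').2]; ring
    · ring
  simp only [h1, Finset.sum_add_distrib]
  rw [Fin.sum_univ_eq_sum_range (fun x => if x = 0 then ind u (α i) * ((ind v (α i) * br y (len i) +
        ind v (β i) * 1) / br y (len i + 1)) else 0) (len i),
    Fin.sum_univ_eq_sum_range (fun x => if x = len i - 1 then ind u (β i) * ((ind v (α i) * 1 +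
        ind v (β i) * br y (len i)) / br y (len i + 1)) else 0) (len i)]
  simp only [Finset.sum_ite_eq', Finset.mem_range]
  by_cases hl : len i = 0
  · simp [hl, br_zero, br_one hy]
  · rw [if_neg hl, if_pos (by omega), if_pos (by omega)]
    ring

lemma det_blockDiagonal_path (len : Fin 3 → ℕ) {y : ℚ} (hy : 2 ≤ y) :
    (Matrix.blockDiagonal' fun i => pathBlock (y + y⁻¹) (len i)).det =
      ∏ i, br y (len i + 1) := by
  rw [(Matrix.blockTriangular_blockDiagonal' _).det_fintype]
  refine Finset.prod_congr rfl fun k _ => ?_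
  rw [← det_pathBlock hy, ← Matrix.det_submatrix_equiv_self (Equiv.sigmaSubtype k).symm]
  congr 1
  ext i j
  simp [Matrix.toSquareBlock_def, Equiv.sigmaSubtype]

lemma det_skel (len : Fin 3 → ℕ) (α β : Fin 3 → Fin 2) {y : ℚ} (hy : 2 ≤ y) :
    (skel len α β (y + y⁻¹)).det =
      (effBlock len α β y).det * ∏ i, br y (len i + 1) := by
  have h : skel len α β (y + y⁻¹) * Matrix.fromBlocks 1 0 (-solBlock len α β y) 1 =
      Matrix.fromBlocks (effBlock len α β y) (linkBlock len α β).transpose 0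
        (Matrix.blockDiagonal' fun i => pathBlock (y + y⁻¹) (len i)) := by
    rw [skel, Matrix.fromBlocks_multiply]
    simp only [Matrix.mul_one, Matrix.mul_zero, zero_add, Matrix.mul_neg,
      blockDiagonal_mul_solBlock len α β hy, add_neg_cancel, ← sub_eq_add_neg,
      junc_sub_link_mul_sol len α β hy]
  have h2 := congrArg Matrix.det h
  rw [Matrix.det_mul, Matrix.det_fromBlocks_zero₁₂, Matrix.det_fromBlocks_zero₂₁,
    det_blockDiagonal_path len hy] at h2
  simpa using h2

/-! ### The Laplacian characteristic polynomial in terms of `skel` -/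

lemma skel_row_sum (len : Fin 3 → ℕ) (α β : Fin 3 → Fin 2) (z : ℚ)
    (hdeg : ∀ u, ∑ i, (ind u (α i) + ind u (β i)) = 3) (a : SkelIdx len) :
    ∑ b, skel len α β z a b = z - 2 := by
  have ind_sum : ∀ w : Fin 2, ∑ v, ind v w = 1 := by intro w; simp [ind]
  rw [Fintype.sum_sum_type]
  rcases a with u | ⟨i, j⟩
  · simp only [skel, Matrix.fromBlocks_apply₁₁, Matrix.fromBlocks_apply₁₂, juncBlock, linkBlock,
      Matrix.transpose_apply, Matrix.of_apply, Fintype.sum_sigma, Finset.sum_sub_distrib,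
      Finset.sum_neg_distrib, Finset.sum_ite_eq, Finset.mem_univ, if_true]
    rw [Finset.sum_comm, sub_add, sub_neg_eq_add, ← Finset.sum_add_distrib,
      show z - 2 = z + 1 - 3 by ring, ← hdeg u]
    congr 1
    refine Finset.sum_congr rfl fun i _ => ?_
    by_cases hl : len i = 0
    · have : ∀ g : Fin (len i) → ℚ, ∑ x, g x = 0 := by rw [hl]; simp
      rw [this]
      simp only [hl, if_true, Finset.sum_add_distrib, ← Finset.mul_sum, ind_sum]
      ring
    · simp only [hl, if_false, Finset.sum_const_zero, zero_add]
      rw [Fin.sum_univ_eq_sum_range (fun x => (if x = 0 then ind u (α i) else 0) +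
        (if x + 1 = len i then ind u (β i) else 0)) (len i), Finset.sum_add_distrib]
      simp only [show ∀ x, (x + 1 = len i) = (x = len i - 1) from fun x => propext (by omega),
        Finset.sum_ite_eq', Finset.mem_range]
      rw [if_pos (by omega), if_pos (by omega)]
  · have hj := j.2
    have h1 := pathBlock_sum z (len i) j (fun _ => 1)
    simp only [mul_one] at h1
    have h2 : ∑ x : (Σ i : Fin 3, Fin (len i)),
        Matrix.blockDiagonal' (fun i => pathBlock z (len i)) ⟨i, j⟩ x =
        ∑ x, pathBlock z (len i) j x := by
      rw [Fintype.sum_sigma, Finset.sum_eq_single i]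
      · simp only [Matrix.blockDiagonal'_apply_eq]
      · intro k _ hk
        exact Finset.sum_eq_zero fun x _ => Matrix.blockDiagonal'_apply_ne _ _ _ (Ne.symm hk)
      · simp
    have h3 : ∑ u, linkBlock len α β ⟨i, j⟩ u = -((if (j : ℕ) = 0 then 1 else 0) +
        (if (j : ℕ) + 1 = len i then 1 else 0)) := by
      simp only [linkBlock, Matrix.of_apply, Finset.sum_neg_distrib, Finset.sum_add_distrib]
      congr 2 <;> split_ifs <;> simp [ind_sum]
    simp only [skel, Matrix.fromBlocks_apply₂₁, Matrix.fromBlocks_apply₂₂]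
    rw [h2, h1, h3]
    have e1 : (0 < (j : ℕ)) ↔ ¬ ((j : ℕ) = 0) := by omega
    have e2 : ((j : ℕ) + 1 < len i) ↔ ¬ ((j : ℕ) + 1 = len i) := by omega
    simp only [e1, e2]
    split_ifs <;> ring

lemma eq_of_offDiag_of_rowSum {ι : Type*} [Fintype ι] [DecidableEq ι] (M N : Matrix ι ι ℚ)
    (hoff : ∀ a b, a ≠ b → M a b = N a b) (hrow : ∀ a, ∑ b, M a b = ∑ b, N a b) : M = N := by
  ext a b
  by_cases hab : a = b
  · subst hab
    have h := hrow a
    rw [← Finset.add_sum_erase _ _ (Finset.mem_univ a),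
      ← Finset.add_sum_erase _ (fun b => N a b) (Finset.mem_univ a),
      Finset.sum_congr rfl fun b hb => hoff a b (Finset.ne_of_mem_erase hb).symm] at h
    exact add_right_cancel h
  · exact hoff a b hab

/-- Both `skel` and `L - (2 - z) I` have all row sums equal to `z - 2`, so only the off-diagonal
entries, i.e. the adjacencies, have to be compared; vertex degrees need not be computed. -/
lemma eval_charpoly_of_skel {n : ℕ} (G : SimpleGraph (Fin n)) (len : Fin 3 → ℕ)
    (α β : Fin 3 → Fin 2) (z : ℚ) (f : SkelIdx len → Fin n) (hf : Function.Injective f)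
    (hn : n = 2 + ∑ i, len i)
    (hdeg : ∀ u, ∑ i, (ind u (α i) + ind u (β i)) = 3)
    (hoff : ∀ a b, a ≠ b → skel len α β z a b = if G.Adj (f a) (f b) then -1 else 0) :
    (G.lapMatrix ℚ).charpoly.eval (2 - z) = (-1) ^ n * (skel len α β z).det := by
  have hbij : Function.Bijective f := by
    rw [Fintype.bijective_iff_injective_and_card]
    refine ⟨hf, ?_⟩
    simp [hn]
  have hs : (skel len α β z) =
      (-(Matrix.scalar (Fin n) (2 - z) - G.lapMatrix ℚ)).submatrix
        (Equiv.ofBijective f hbij) (Equiv.ofBijective f hbij) := by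
    apply eq_of_offDiag_of_rowSum
    · intro a b hab
      have hfab : f a ≠ f b := fun h => hab (hf h)
      rw [hoff a b hab]
      simp [SimpleGraph.lapMatrix, SimpleGraph.degMatrix, hfab, SimpleGraph.adjMatrix_apply]
      split_ifs <;> simp
    · intro a
      rw [skel_row_sum len α β z hdeg]
      simp only [Matrix.submatrix_apply]
      rw [Equiv.sum_comp (Equiv.ofBijective f hbij) (fun w =>
        (-(Matrix.scalar (Fin n) (2 - z) - G.lapMatrix ℚ)) (Equiv.ofBijective f hbij a) w)]
      have h := congrFun (SimpleGraph.lapMatrix_mulVec_const_eq_zero (R := ℚ) G) (f a)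
      simp only [Matrix.mulVec, dotProduct, mul_one, Pi.zero_apply] at h
      simp [Finset.sum_sub_distrib, h, Matrix.diagonal_apply]
  rw [hs, Matrix.det_submatrix_equiv_self, Matrix.det_neg, Matrix.eval_charpoly, Fintype.card_fin,
    ← mul_assoc, ← mul_pow]
  simp

/-! ### The dumbbell and theta graphs as skeletons -/

lemma dumbbell_adj (p k q : ℕ) (a b : Fin (p + q + k)) :
    (dumbbellGraph p k q).Adj a b ↔ (a : ℕ) ≠ b ∧
      (((b : ℕ) = a + 1 ∧ (b : ℕ) < p ∨ (a : ℕ) = 0 ∧ (b : ℕ) = p - 1 ∨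
        p ≤ (a : ℕ) ∧ (b : ℕ) = a + 1 ∧ (b : ℕ) < p + q ∨ (a : ℕ) = p ∧ (b : ℕ) = p + q - 1 ∨
        p + q ≤ (a : ℕ) ∧ (b : ℕ) = a + 1 ∧ (b : ℕ) < p + q + k ∨
        k = 0 ∧ (a : ℕ) = 0 ∧ (b : ℕ) = p ∨
        k ≠ 0 ∧ ((a : ℕ) = 0 ∧ (b : ℕ) = p + q ∨ (a : ℕ) = p ∧ (b : ℕ) = p + q + k - 1)) ∨
      ((a : ℕ) = b + 1 ∧ (a : ℕ) < p ∨ (b : ℕ) = 0 ∧ (a : ℕ) = p - 1 ∨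
        p ≤ (b : ℕ) ∧ (a : ℕ) = b + 1 ∧ (a : ℕ) < p + q ∨ (b : ℕ) = p ∧ (a : ℕ) = p + q - 1 ∨
        p + q ≤ (b : ℕ) ∧ (a : ℕ) = b + 1 ∧ (a : ℕ) < p + q + k ∨
        k = 0 ∧ (b : ℕ) = 0 ∧ (a : ℕ) = p ∨
        k ≠ 0 ∧ ((b : ℕ) = 0 ∧ (a : ℕ) = p + q ∨ (b : ℕ) = p ∧ (a : ℕ) = p + q + k - 1))) := by
  rw [dumbbellGraph, SimpleGraph.fromRel_adj, Ne, Fin.ext_iff]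
  by_cases hk : k = 0 <;> simp [dumbbellRel, hk]

lemma theta_adj (r s t : ℕ) (hr : r ≠ 0) (hs : s ≠ 0) (a b : Fin (r + s + t + 2)) :
    (thetaGraph r s t).Adj a b ↔ (a : ℕ) ≠ b ∧
      (((a : ℕ) = 0 ∧ (b : ℕ) = 1 ∨ 1 ≤ (a : ℕ) ∧ (b : ℕ) = a + 1 ∧ (b : ℕ) < 1 + r ∨
        (a : ℕ) = r ∧ (b : ℕ) = r + s + t + 1 ∨
        (a : ℕ) = 0 ∧ (b : ℕ) = r + 1 ∨ r + 1 ≤ (a : ℕ) ∧ (b : ℕ) = a + 1 ∧ (b : ℕ) < r + 1 + s ∨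
        (a : ℕ) = r + s ∧ (b : ℕ) = r + s + t + 1 ∨
        t = 0 ∧ (a : ℕ) = 0 ∧ (b : ℕ) = r + s + t + 1 ∨
        t ≠ 0 ∧ ((a : ℕ) = 0 ∧ (b : ℕ) = r + s + 1 ∨
          r + s + 1 ≤ (a : ℕ) ∧ (b : ℕ) = a + 1 ∧ (b : ℕ) < r + s + 1 + t ∨
          (a : ℕ) = r + s + t ∧ (b : ℕ) = r + s + t + 1)) ∨
      ((b : ℕ) = 0 ∧ (a : ℕ) = 1 ∨ 1 ≤ (b : ℕ) ∧ (a : ℕ) = b + 1 ∧ (a : ℕ) < 1 + r ∨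
        (b : ℕ) = r ∧ (a : ℕ) = r + s + t + 1 ∨
        (b : ℕ) = 0 ∧ (a : ℕ) = r + 1 ∨ r + 1 ≤ (b : ℕ) ∧ (a : ℕ) = b + 1 ∧ (a : ℕ) < r + 1 + s ∨
        (b : ℕ) = r + s ∧ (a : ℕ) = r + s + t + 1 ∨
        t = 0 ∧ (b : ℕ) = 0 ∧ (a : ℕ) = r + s + t + 1 ∨
        t ≠ 0 ∧ ((b : ℕ) = 0 ∧ (a : ℕ) = r + s + 1 ∨
          r + s + 1 ≤ (b : ℕ) ∧ (a : ℕ) = b + 1 ∧ (a : ℕ) < r + s + 1 + t ∨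
          (b : ℕ) = r + s + t ∧ (a : ℕ) = r + s + t + 1))) := by
  have e1 : 1 + r - 1 = r := by omega
  have e2 : r + 1 + s - 1 = r + s := by omega
  have e3 : r + s + 1 + t - 1 = r + s + t := by omega
  rw [thetaGraph, SimpleGraph.fromRel_adj, Ne, Fin.ext_iff]
  by_cases ht : t = 0 <;>
  simp only [thetaBlockRel, hr, hs, ht, if_true, if_false, e1, e2, e3, or_assoc, ne_eq,
    not_true_eq_false, not_false_eq_true, true_and, false_and, false_or, or_false, add_zero]

lemma skel_path_path (len : Fin 3 → ℕ) (α β : Fin 3 → Fin 2) (z : ℚ) (i i' : Fin 3)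
    (j : Fin (len i)) (j' : Fin (len i')) :
    skel len α β z (Sum.inr ⟨i, j⟩) (Sum.inr ⟨i', j'⟩) =
      if i = i' then
        if (j : ℕ) = j' then z else if (j : ℕ) + 1 = j' ∨ (j' : ℕ) + 1 = j then -1 else 0
      else 0 := by
  by_cases h : i = i'
  · subst h
    simp [skel, pathBlock]
  · simp [skel, Matrix.blockDiagonal'_apply_ne _ _ _ h, h]

lemma path_idx_ext {len : Fin 3 → ℕ} {i i' : Fin 3} {j : Fin (len i)} {j' : Fin (len i')}
    (h : i = i') (hj : (j : ℕ) = j') :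
    (Sum.inr ⟨i, j⟩ : SkelIdx len) = Sum.inr ⟨i', j'⟩ := by
  subst h
  rw [Fin.ext hj]

set_option maxHeartbeats 1000000 in
/-- The two cycles are closed paths with `p - 1` and `q - 1` internal vertices at the junctions `0`
and `1`. The vertex map sends the junctions to `0` and `p`, and the paths to consecutive
intervals. -/
lemma dumbbell_skel_off (p k q : ℕ) (hq : 3 ≤ q) (hp : 3 ≤ p) (z : ℚ) :
    ∃ f : SkelIdx ![p - 1, q - 1, k] → Fin (p + q + k), Function.Injective f ∧
      ∀ a b, a ≠ b → skel ![p - 1, q - 1, k] ![0, 1, 0] ![0, 1, 1] z a b =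
        if (dumbbellGraph p k q).Adj (f a) (f b) then -1 else 0 := by
  have hb : ∀ x : SkelIdx ![p - 1, q - 1, k],
      Sum.elim ![0, p] (fun x => ![1, p + 1, p + q] x.1 + (x.2 : ℕ)) x < p + q + k := by
    rintro (u | ⟨i, j⟩)
    · fin_cases u <;> simp <;> omega
    · fin_cases i <;> simp at j ⊢ <;> omega
  refine ⟨fun x => ⟨_, hb x⟩, ?_, ?_⟩
  · rintro (u | ⟨i, j⟩) (v | ⟨i', j'⟩) h
    · fin_cases u <;> fin_cases v <;> simp at h ⊢ <;> omega
    · fin_cases u <;> fin_cases i' <;> simp at h j' ⊢ <;> omega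
    · fin_cases v <;> fin_cases i <;> simp at h j ⊢ <;> omega
    · have hj := j.2
      have hj' := j'.2
      have h' := congrArg Fin.val h
      simp only [Sum.elim_inr] at h'
      have hi : i = i' := by
        fin_cases i <;> fin_cases i' <;> simp at h' hj hj' ⊢ <;> omega
      subst hi
      exact path_idx_ext rfl (by omega)
  · intro a b hab
    rw [dumbbell_adj]
    rcases a with u | ⟨i, j⟩ <;> rcases b with v | ⟨i', j'⟩
    · fin_cases u <;> fin_cases v <;>
        simp [skel, juncBlock, ind, Fin.sum_univ_three] at hab ⊢ <;> grind
    · fin_cases u <;> fin_cases i' <;>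
        simp [skel, linkBlock, ind] at j' ⊢ <;> grind
    · fin_cases v <;> fin_cases i <;>
        simp [skel, linkBlock, ind] at j ⊢ <;> grind
    · have hab' : i = i' → (j : ℕ) ≠ j' := fun h h' => hab (path_idx_ext h h')
      have hj := j.2
      have hj' := j'.2
      rw [skel_path_path]
      simp only [Sum.elim_inr]
      fin_cases i <;> fin_cases i' <;> simp at hab' hj hj' ⊢ <;> grind (splits := 40)

set_option maxHeartbeats 1000000 in
/-- All three paths run from junction `0`, sent to the vertex `0`, to junction `1`, sent to the
vertex `r + s + t + 1`. -/
lemma theta_skel_off (r s t : ℕ) (hr : r ≠ 0) (hs : s ≠ 0) (z : ℚ) :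
    ∃ f : SkelIdx ![r, s, t] → Fin (r + s + t + 2), Function.Injective f ∧
      ∀ a b, a ≠ b → skel ![r, s, t] ![0, 0, 0] ![1, 1, 1] z a b =
        if (thetaGraph r s t).Adj (f a) (f b) then -1 else 0 := by
  have hb : ∀ x : SkelIdx ![r, s, t],
      Sum.elim ![0, r + s + t + 1] (fun x => ![1, r + 1, r + s + 1] x.1 + (x.2 : ℕ)) x <
        r + s + t + 2 := by
    rintro (u | ⟨i, j⟩)
    · fin_cases u <;> simp
    · fin_cases i <;> simp at j ⊢ <;> omega
  refine ⟨fun x => ⟨_, hb x⟩, ?_, ?_⟩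
  · rintro (u | ⟨i, j⟩) (v | ⟨i', j'⟩) h
    · fin_cases u <;> fin_cases v <;> simp at h ⊢
    · fin_cases u <;> fin_cases i' <;> simp at h j' ⊢ <;> omega
    · fin_cases v <;> fin_cases i <;> simp at h j ⊢ <;> omega
    · have hj := j.2
      have hj' := j'.2
      have h' := congrArg Fin.val h
      simp only [Sum.elim_inr] at h'
      have hi : i = i' := by
        fin_cases i <;> fin_cases i' <;> simp at h' hj hj' ⊢ <;> omega
      subst hi
      exact path_idx_ext rfl (by omega)
  · intro a b hab
    rw [theta_adj r s t hr hs]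
    rcases a with u | ⟨i, j⟩ <;> rcases b with v | ⟨i', j'⟩
    · fin_cases u <;> fin_cases v <;>
        simp [skel, juncBlock, ind, Fin.sum_univ_three, hr, hs] at hab ⊢ <;> grind
    · fin_cases u <;> fin_cases i' <;>
        simp [skel, linkBlock, ind] at j' ⊢ <;> grind
    · fin_cases v <;> fin_cases i <;>
        simp [skel, linkBlock, ind] at j ⊢ <;> grind
    · have hab' : i = i' → (j : ℕ) ≠ j' := fun h h' => hab (path_idx_ext h h')
      have hj := j.2
      have hj' := j'.2
      rw [skel_path_path]
      simp only [Sum.elim_inr]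
      fin_cases i <;> fin_cases i' <;> simp at hab' hj hj' ⊢ <;> grind (splits := 40)

/-! ### Closed forms of the two determinants -/

/-- The polynomial in `y` which is, up to a factor depending only on `y` and the number of vertices,
the Laplacian characteristic polynomial of the dumbbell graph at `2 - (y + y⁻¹)`. -/
noncomputable def dumbbellPoly (p k q : ℕ) : ℚ[X] :=
  (X ^ p - 1) * (X ^ q - 1) *
    (X ^ (2 * k + 2) * ((X + 2) * X ^ p - X) * ((X + 2) * X ^ q - X) -
      (X ^ p - 1 - 2 * X) * (X ^ q - 1 - 2 * X))

/-- The analogue of `dumbbellPoly` for the theta graph whose three paths have `R`, `S` and `T`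
edges. -/
noncomputable def thetaPoly (R S T : ℕ) : ℚ[X] :=
  (X * (X ^ R + X ^ S + X ^ T) - (X + 2) * X ^ (R + S + T)) ^ 2 -
    (1 + 2 * X - (X ^ (S + T) + X ^ (R + T) + X ^ (R + S))) ^ 2

lemma br_eq {y : ℚ} (hy : 2 ≤ y) (n : ℕ) :
    br y n = ((y ^ n) ^ 2 - 1) * y / (y ^ n * (y ^ 2 - 1)) := by
  have h0 : y ≠ 0 := by linarith
  have h1 : y ^ 2 - 1 ≠ 0 := by nlinarith
  rw [br, inv_pow, div_eq_div_iff (sub_inv_pos hy).ne' (by positivity)]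
  field_simp

/-- With `p = a + 1` and `q = b + 1`, the exponent of `y` is the number of vertices plus three. -/
lemma eval_dumbbellPoly (a b k : ℕ) {y : ℚ} (hy : 2 ≤ y) :
    (dumbbellPoly (a + 1) k (b + 1)).eval y * (y - 1) ^ 2 =
      y ^ (a + b + k + 5) * (y - y⁻¹) ^ 3 *
        (skel ![a, b, k] ![0, 1, 0] ![0, 1, 1] (y + y⁻¹)).det := by
  have h0 : y ≠ 0 := by linarith
  have h1 : y ^ 2 - 1 ≠ 0 := by nlinarith
  have hk := (br_succ_pos hy k).ne'
  have e1 : (skel ![a, b, k] ![0, 1, 0] ![0, 1, 1] (y + y⁻¹)).det * br y (k + 1) =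
      (((y + y⁻¹ + 1) * br y (k + 1) - br y k) * br y (a + 1)
        - (2 * br y a + 2) * br y (k + 1)) *
      (((y + y⁻¹ + 1) * br y (k + 1) - br y k) * br y (b + 1)
        - (2 * br y b + 2) * br y (k + 1)) - br y (a + 1) * br y (b + 1) := by
    have ha := (br_succ_pos hy a).ne'
    have hb := (br_succ_pos hy b).ne'
    rw [det_skel _ _ _ hy, Matrix.det_fin_two]
    simp only [effBlock, Matrix.of_apply, Fin.sum_univ_three, Fin.prod_univ_three]
    simp [ind]
    field_simp
    ring
  apply mul_right_cancel₀ hk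
  rw [mul_assoc _ _ (br y (k + 1)), mul_assoc _ _ (br y (k + 1)), e1]
  simp only [br_eq hy, dumbbellPoly, eval_mul, eval_sub, eval_add, eval_pow, eval_X, eval_one,
    eval_ofNat, pow_add, pow_mul', pow_one]
  have hA : y ^ a ≠ 0 := by positivity
  have hB : y ^ b ≠ 0 := by positivity
  have hK : y ^ k ≠ 0 := by positivity
  generalize y ^ a = A at *
  generalize y ^ b = B at *
  generalize y ^ k = K at *
  field_simp
  ring

lemma eval_thetaPoly (a b c : ℕ) {y : ℚ} (hy : 2 ≤ y) :
    (thetaPoly (a + 1) (b + 1) (c + 1)).eval y * (y - 1) ^ 2 =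
      y ^ (a + b + c + 5) * (y - y⁻¹) ^ 3 *
        (skel ![a, b, c] ![0, 0, 0] ![1, 1, 1] (y + y⁻¹)).det := by
  have h0 : y ≠ 0 := by linarith
  have h1 : y ^ 2 - 1 ≠ 0 := by nlinarith
  have ha := (br_succ_pos hy a).ne'
  have hb := (br_succ_pos hy b).ne'
  have hc := (br_succ_pos hy c).ne'
  have e1 : (skel ![a, b, c] ![0, 0, 0] ![1, 1, 1] (y + y⁻¹)).det *
      (br y (a + 1) * br y (b + 1) * br y (c + 1)) =
      ((y + y⁻¹ + 1) * (br y (a + 1) * br y (b + 1) * br y (c + 1)) -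
        br y a * br y (b + 1) * br y (c + 1) - br y (a + 1) * br y b * br y (c + 1) -
        br y (a + 1) * br y (b + 1) * br y c) ^ 2 -
      (br y (b + 1) * br y (c + 1) + br y (a + 1) * br y (c + 1) +
        br y (a + 1) * br y (b + 1)) ^ 2 := by
    rw [det_skel _ _ _ hy, Matrix.det_fin_two]
    simp only [effBlock, Matrix.of_apply, Fin.sum_univ_three, Fin.prod_univ_three]
    simp [ind]
    field_simp
    ring
  apply mul_right_cancel₀ (mul_ne_zero (mul_ne_zero ha hb) hc)
  rw [mul_assoc _ _ (br y (a + 1) * br y (b + 1) * br y (c + 1)),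
    mul_assoc _ _ (br y (a + 1) * br y (b + 1) * br y (c + 1)), e1]
  simp only [br_eq hy, thetaPoly, eval_mul, eval_sub, eval_add, eval_pow, eval_X, eval_one,
    eval_ofNat, pow_add, pow_one]
  have hA : y ^ a ≠ 0 := by positivity
  have hB : y ^ b ≠ 0 := by positivity
  have hC : y ^ c ≠ 0 := by positivity
  generalize y ^ a = A at *
  generalize y ^ b = B at *
  generalize y ^ c = C at *
  field_simp
  ring

lemma charpoly_lap_natDegree {n : ℕ} (G : SimpleGraph (Fin n)) :
    (G.lapMatrix ℚ).charpoly.natDegree = n := by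
  rw [Matrix.charpoly_natDegree_eq_dim, Fintype.card_fin]

/-- The common factor relating the polynomials to the characteristic polynomials depends only on `y`
and the number of vertices, so it cancels once the degrees have been compared. -/
lemma polys_eq_of_charpoly_eq (p k q r s t : ℕ) (hq : 3 ≤ q) (hp : 3 ≤ p) (hr : r ≠ 0)
    (hs : s ≠ 0)
    (h : ((dumbbellGraph p k q).lapMatrix ℚ).charpoly =
      ((thetaGraph r s t).lapMatrix ℚ).charpoly) :
    p + q + k = r + s + t + 2 ∧ dumbbellPoly p k q = thetaPoly (r + 1) (s + 1) (t + 1) := by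
  have hn : p + q + k = r + s + t + 2 := by
    have := congrArg natDegree h
    rwa [charpoly_lap_natDegree, charpoly_lap_natDegree] at this
  refine ⟨hn, Polynomial.eq_of_infinite_eval_eq _ _ ((Set.Ici_infinite (2 : ℚ)).mono ?_)⟩
  intro y (hy : 2 ≤ y)
  obtain ⟨f, hf, hfo⟩ := dumbbell_skel_off p k q hq hp (y + y⁻¹)
  obtain ⟨g, hg, hgo⟩ := theta_skel_off r s t hr hs (y + y⁻¹)
  have h1 := eval_charpoly_of_skel _ _ _ _ _ f hf
    (by simp [Fin.sum_univ_three]; omega)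
    (by intro u; fin_cases u <;> simp [ind, Fin.sum_univ_three] <;> norm_num) hfo
  have h2 := eval_charpoly_of_skel _ _ _ _ _ g hg
    (by simp [Fin.sum_univ_three]; omega)
    (by intro u; fin_cases u <;> simp [ind, Fin.sum_univ_three] <;> norm_num) hgo
  rw [h, h2, hn] at h1
  have h3 := mul_left_cancel₀ (pow_ne_zero _ (by norm_num)) h1
  have h4 := eval_dumbbellPoly (p - 1) (q - 1) k hy
  have h5 := eval_thetaPoly r s t hy
  rw [Nat.sub_add_cancel (by omega), Nat.sub_add_cancel (by omega), ← h3,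
    show p - 1 + (q - 1) + k + 5 = r + s + t + 5 by omega, ← h5] at h4
  exact mul_right_cancel₀ (pow_ne_zero _ (by linarith)) h4

/-! ### Consequences of the polynomial identity -/

lemma exists_pow_eq (n : ℕ) : ∃ g : ℚ[X], X ^ n = 1 + (X - 1) * g ∧ g.eval 1 = n :=
  ⟨∑ i ∈ Finset.range n, X ^ i, by
    rw [mul_geom_sum]; ring, by simp [eval_finsetSum]⟩

/-- The two sides are the numbers of spanning trees of the dumbbell and theta graphs. They are read
off by dividing by `(X - 1) ^ 3` and setting `X = 1`. -/
lemma mul_eq_of_polys_eq {p k q R S T : ℕ} (hn : p + q + k + 1 = R + S + T) (hp : 0 < p)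
    (h : dumbbellPoly p k q = thetaPoly R S T) :
    p * q = R * S + R * T + S * T := by
  obtain ⟨a, ha, ha1⟩ := exists_pow_eq p
  obtain ⟨b, hb, hb1⟩ := exists_pow_eq q
  obtain ⟨c, hc, hc1⟩ := exists_pow_eq (k + 1)
  obtain ⟨u, hu, hu1⟩ := exists_pow_eq R
  obtain ⟨v, hv, hv1⟩ := exists_pow_eq S
  obtain ⟨w, hw, hw1⟩ := exists_pow_eq T
  obtain ⟨Y, hY⟩ : ∃ Y : ℚ[X], Y = X - 1 := ⟨_, rfl⟩
  have hX : (X : ℚ[X]) = 1 + Y := by rw [hY]; ring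
  have hY0 : Y ≠ 0 := by rw [hY]; exact X_sub_C_ne_zero (1 : ℚ)
  have hY1 : Y.eval 1 = 0 := by simp [hY]
  rw [← hY] at ha hb hc hu hv hw
  have hD : dumbbellPoly p k q = Y ^ 3 * (a * b *
      ((2 * (3 + Y) * (a + b) + Y * ((3 + Y) ^ 2 * a * b)) +
        (2 * c + Y * c ^ 2) * (4 + Y * (2 * (3 + Y) * (a + b) + Y * ((3 + Y) ^ 2 * a * b))) -
        (2 * (2 - a) + 2 * (2 - b) + Y * ((2 - a) * (2 - b))))) := by
    rw [dumbbellPoly, show 2 * k + 2 = (k + 1) + (k + 1) by ring, pow_add, ha, hb, hc, hX]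
    ring
  have hT : thetaPoly R S T = Y ^ 3 * (-(2 * (u * v + u * w + v * w) +
        Y * (3 * (u * v * w) + (u * v + u * w + v * w)) + Y ^ 2 * (u * v * w)) *
      (-4 * (u + v + w) + 4 - Y * (4 * (u * v + u * w + v * w)) -
        Y * (3 * Y * (u * v * w) + Y * (u * v + u * w + v * w) + Y ^ 2 * (u * v * w)))) := by
    rw [thetaPoly, pow_add, pow_add, pow_add, pow_add, hu, hv, hw, hX]
    ring
  rw [hD, hT] at h
  have h1 := congrArg (Polynomial.eval 1) (mul_left_cancel₀ (pow_ne_zero 3 hY0) h)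
  simp only [eval_mul, eval_add, eval_sub, eval_neg, eval_pow, eval_ofNat, hY1, ha1, hb1,
    hc1, hu1, hv1, hw1] at h1
  have hn' : (p : ℚ) + q + k + 1 = R + S + T := by exact_mod_cast hn
  have hp' : (0 : ℚ) < p := by exact_mod_cast hp
  have hk : ((k + 1 : ℕ) : ℚ) = R + S + T - p - q := by push_cast; linarith
  rw [hk] at h1
  have hpos : (8 * ((R : ℚ) + S + T - 1)) ≠ 0 := by
    have hq' : (0 : ℚ) ≤ q := by positivity
    have hk' : (0 : ℚ) ≤ k := by positivity
    rw [← hn']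
    exact ne_of_gt (by linarith)
  have h2 : (p : ℚ) * q = R * S + R * T + S * T := by
    apply mul_right_cancel₀ hpos
    linear_combination h1
  exact_mod_cast h2

/-- Here `d = S + T - q`, and `p q ≤ (R + d - 1) (S + T - d) < R S + R T + S T`. -/
lemma arith_contra {p k q R S T : ℕ} (hT : 1 ≤ T) (hTS : T ≤ S) (hSR : S ≤ R)
    (hn : p + q + k + 1 = R + S + T) (hq : q ≤ S + T)
    (hm : p * q = R * S + R * T + S * T) : False := by
  obtain ⟨d, hd⟩ := Nat.exists_eq_add_of_le hq
  have h1 : p * q ≤ (R + d - 1) * q := Nat.mul_le_mul_right _ (by omega)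
  zify [show 1 ≤ R + d by omega] at *
  have e : (q : ℤ) = S + T - d := by linarith
  have h2 : (R + d - 1 : ℤ) * q = R * S + R * T - R * d + d * (S + T - d) - (S + T - d) := by
    rw [e]; ring
  nlinarith [sq_nonneg (2 * (d:ℤ) - (T + 1)), mul_nonneg (Int.natCast_nonneg d) (sub_nonneg.2 hSR),
    mul_nonneg (sub_nonneg.2 hT) (sub_nonneg.2 hTS)]

/-- If `q > S + T`, then modulo `X ^ (S + T + 1)` both polynomials are `-(1 + 2 X) ^ 2` plus,
respectively, `X ^ (2 k + 4)` and
`X ^ (2 T + 2) + 2 (X ^ (S + T) + X ^ (R + T) + X ^ (R + S))`. The coefficient of `X ^ (S + T)` is at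
most `1` in the former and at least `2` in the latter. -/
lemma le_of_polys_eq {p k q R S T : ℕ} (hT : 1 ≤ T) (hTS : T ≤ S) (hSR : S ≤ R) (hqp : q ≤ p)
    (h : dumbbellPoly p k q = thetaPoly R S T) : q ≤ S + T := by
  by_contra! hq
  obtain ⟨t, rfl⟩ := Nat.exists_eq_add_of_le hT
  obtain ⟨s, rfl⟩ := Nat.exists_eq_add_of_le hTS
  obtain ⟨r, rfl⟩ := Nat.exists_eq_add_of_le hSR
  obtain ⟨e, rfl⟩ := Nat.exists_eq_add_of_le hq
  obtain ⟨f, rfl⟩ := Nat.exists_eq_add_of_le hqp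
  -- Now `T = 1 + t`, `S = 1 + t + s`, `R = 1 + t + s + r`, so `S + T = 2 t + s + 2`.
  have key : ∃ W : ℚ[X], X ^ (2 * k + 4) + X ^ (2 * t + s + 3) * W =
      X ^ (2 * t + 4) + 2 * (X ^ (2 * t + s + 2) + X ^ (2 * t + s + r + 2) +
        X ^ (2 * t + 2 * s + r + 2)) := by
    simp only [dumbbellPoly, thetaPoly, pow_add, pow_mul', pow_succ, pow_zero, one_mul] at h ⊢
    generalize (X : ℚ[X]) ^ t = a at *
    generalize (X : ℚ[X]) ^ s = b at *
    generalize (X : ℚ[X]) ^ r = d at *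
    generalize (X : ℚ[X]) ^ e = E at *
    generalize (X : ℚ[X]) ^ f = F at *
    generalize (X : ℚ[X]) ^ k = K at *
    generalize (X : ℚ[X]) = x at *
    -- `Q` is `X ^ q`; it is divisible by `X ^ (S + T + 1) = x ^ 3 * a ^ 2 * b`. The rest of the
    -- dumbbell polynomial is `K ^ 2 * x ^ 4 - (1 + 2 * x) ^ 2` plus multiples of `Q`.
    obtain ⟨Q, hQ⟩ : ∃ Q, Q = x ^ 3 * a ^ 2 * b * E := ⟨_, rfl⟩
    obtain ⟨M, hM⟩ : ∃ M, M = K ^ 2 * x ^ 2 * ((x + 2) ^ 2 * Q * F - x * (x + 2) * (F + 1)) -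
      (Q * F - (1 + 2 * x) * (F + 1)) := ⟨_, rfl⟩
    -- The bases of the two squares in the theta polynomial are `x ^ 2 * a * (1 + b * V)` and
    -- `1 + 2 * x - x ^ 2 * a ^ 2 * b * Z`.
    obtain ⟨V, hV⟩ : ∃ V, V = 1 + d - (x + 2) * x * a ^ 2 * b * d := ⟨_, rfl⟩
    obtain ⟨Z, hZ⟩ : ∃ Z, Z = 1 + d + b * d := ⟨_, rfl⟩
    refine ⟨E * (M + (Q * F - F - 1) * (K ^ 2 * x ^ 4 - (1 + 2 * x) ^ 2 + Q * M)) -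
      (x * (2 * V + b * V ^ 2) + 4 * Z - x * a ^ 2 * b * Z ^ 2), ?_⟩
    subst hM hV hZ hQ
    linear_combination h
  obtain ⟨W, hW⟩ := key
  have h1 := congrArg (fun P : ℚ[X] => P.coeff (2 * t + s + 2)) hW
  simp only [coeff_add, coeff_X_pow, coeff_X_pow_mul', coeff_ofNat_mul] at h1
  rw [if_neg (by omega : ¬ 2 * t + s + 3 ≤ 2 * t + s + 2)] at h1
  split_ifs at h1 <;> norm_num at h1

/-- **No dumbbell graph is L-cospectral with a theta graph.** -/
theorem dumbbell_not_lapCospectral_theta (p k q r s t : ℕ)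
    (hq : 3 ≤ q) (hqp : q ≤ p)
    (hts : t ≤ s) (hsr : s ≤ r) (hst : (s, t) ≠ (0, 0)) :
    ((dumbbellGraph p k q).lapMatrix ℚ).charpoly ≠
      ((thetaGraph r s t).lapMatrix ℚ).charpoly := by
  intro h
  have hs : s ≠ 0 := by
    rintro rfl
    exact hst (by rw [Nat.le_zero.1 hts])
  obtain ⟨hn, hpoly⟩ := polys_eq_of_charpoly_eq p k q r s t hq (by omega) (by omega) hs h
  have hn' : p + q + k + 1 = (r + 1) + (s + 1) + (t + 1) := by omega
  exact arith_contra (by omega) (by omega) (by omega) hn'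
    (le_of_polys_eq (by omega) (by omega) (by omega) hqp hpoly)
    (mul_eq_of_polys_eq hn' (by omega) hpoly)
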